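/- Let q ≥ 4 be a prime power. The prime simplicial complex Π(PSL₂(F_q)) is pure if and only if q ∈ {4, 5, 7, 8, 9, 17}. -/

import Mathlib

/-- The projective special linear group of degree 2 over a field `F`:
the quotient of `SL₂(F)` by its center. -/
abbrev PSL2 (F : Type*) [Field F] : Type _ :=
  Matrix.SpecialLinearGroup (Fin 2) F ⧸
    Subgroup.center (Matrix.SpecialLinearGroup (Fin 2) F)

/-- A finite set of primes `S` is a *prime simplex* of the group `G` if it is nonempty,
consists of primes, and `G` contains an element whose order is the product of the
primes in `S`. -/
def IsPrimeSimplex (G : Type*) [Group G] (S : Finset ℕ) : Prop :=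
  S.Nonempty ∧ (∀ p ∈ S, p.Prime) ∧ ∃ g : G, orderOf g = ∏ p ∈ S, p

/-- A prime simplex is maximal if it is maximal with respect to inclusion among
prime simplices. -/
def IsMaximalPrimeSimplex (G : Type*) [Group G] (S : Finset ℕ) : Prop :=
  IsPrimeSimplex G S ∧ ∀ T : Finset ℕ, IsPrimeSimplex G T → S ⊆ T → T = S

/-- The prime simplicial complex of `G` is *pure* if all maximal prime simplices have
the same cardinality. -/
def PurePrimeSimplicialComplex (G : Type*) [Group G] : Prop :=
  ∀ S T : Finset ℕ, IsMaximalPrimeSimplex G S → IsMaximalPrimeSimplex G T →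
    S.card = T.card

/-!
Let `A ∈ SL₂(F_q)` have eigenvalues `l, l⁻¹` in the algebraic closure. If `l² ≠ 1`, then `A ^ n` is
scalar exactly when `l ^ n = l⁻¹ ^ n`, so the image of `A` in `PSL₂(F_q)` has the order of `l²`; if
`l² = 1`, then `A ^ p` is scalar, where `p` is the characteristic. As `l` occurs exactly when its
trace `l + l⁻¹` lies in `F_q`, that is when `l ^ (q - 1) = 1` or `l ^ (q + 1) = 1`, the
element orders of `PSL₂(F_q)` are the divisors of `p` and of `(q ± 1) / gcd(2, q ± 1)`. Hence `{p}`
is a maximal simplex, and purity means that these two quotients are powers of primes.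

If `q = 2 ^ f`, one of `2 ^ f ± 1` is divisible by `3`, hence a power of `3`. If `q = 2 * c + 1`,
the even one of `c`, `c + 1` is a power of `2`, so the other one and `q` are both of the form
`2 ^ a + 1` or both of the form `2 ^ a - 1` for consecutive exponents, and again one of them is a
power of `3`. So only the equations `2 ^ f ± 1 = 3 ^ m` remain.
-/

open Finset

section PrimeSimplex

variable {G : Type*} [Group G]

theorem isPrimeSimplex_iff_exists_primeFactors_orderOf_eq {S : Finset ℕ} :
    IsPrimeSimplex G S ↔ S.Nonempty ∧ ∃ g : G, (orderOf g).primeFactors = S := by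
  refine and_congr_right fun hS ↦ ⟨?_, ?_⟩
  · rintro ⟨hprime, g, hg⟩
    exact ⟨g, by rw [hg, Nat.primeFactors_prod hprime]⟩
  · rintro ⟨g, rfl⟩
    have hg : orderOf g ≠ 0 := fun h ↦ by simp [h] at hS
    exact ⟨fun p ↦ Nat.prime_of_mem_primeFactors, _,
      orderOf_pow_orderOf_div hg (orderOf g).prod_primeFactors_dvd⟩

theorem finite_setOf_isPrimeSimplex [Finite G] : {S | IsPrimeSimplex G S}.Finite := by
  refine (Set.finite_range fun g : G ↦ (orderOf g).primeFactors).subset fun S hS ↦ ?_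
  exact (isPrimeSimplex_iff_exists_primeFactors_orderOf_eq.1 hS).2

theorem IsPrimeSimplex.exists_isMaximalPrimeSimplex_superset [Finite G] {S : Finset ℕ}
    (hS : IsPrimeSimplex G S) : ∃ T, IsMaximalPrimeSimplex G T ∧ S ⊆ T := by
  obtain ⟨T, hST, hT⟩ := finite_setOf_isPrimeSimplex.exists_le_maximal hS
  exact ⟨T, ⟨hT.prop, fun U hU hTU ↦ (hT.eq_of_le hU hTU).symm⟩, hST⟩

theorem isMaximalPrimeSimplex_singleton {p : ℕ} (hp : p.Prime) (hex : ∃ g : G, orderOf g = p)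
    (hmax : ∀ g : G, p ∣ orderOf g → orderOf g = p) : IsMaximalPrimeSimplex G {p} := by
  obtain ⟨g, hg⟩ := hex
  refine ⟨⟨singleton_nonempty p, by simpa using hp, g, by simpa using hg⟩, fun T hT hpT ↦ ?_⟩
  obtain ⟨-, h, rfl⟩ := isPrimeSimplex_iff_exists_primeFactors_orderOf_eq.1 hT
  rw [hmax h (Nat.dvd_of_mem_primeFactors (singleton_subset_iff.1 hpT)), hp.primeFactors]

theorem pure_iff_card_primeFactors_orderOf_le_one [Finite G] {p : ℕ}
    (hp : IsMaximalPrimeSimplex G {p}) :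
    PurePrimeSimplicialComplex G ↔ ∀ g : G, #(orderOf g).primeFactors ≤ 1 := by
  refine ⟨fun hpure g ↦ ?_, fun hG S T hS hT ↦ ?_⟩
  · rcases (orderOf g).primeFactors.eq_empty_or_nonempty with hg | hg
    · simp [hg]
    obtain ⟨T, hT, hgT⟩ := IsPrimeSimplex.exists_isMaximalPrimeSimplex_superset
      (isPrimeSimplex_iff_exists_primeFactors_orderOf_eq.2 ⟨hg, g, rfl⟩)
    calc #(orderOf g).primeFactors ≤ #T := card_le_card hgT
      _ = #{p} := hpure T {p} hT hp
      _ = 1 := card_singleton p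
  · have card_eq_one {S : Finset ℕ} (hS : IsPrimeSimplex G S) : #S = 1 := by
      obtain ⟨hne, g, rfl⟩ := isPrimeSimplex_iff_exists_primeFactors_orderOf_eq.1 hS
      exact le_antisymm (hG g) hne.card_pos
    rw [card_eq_one hS.1, card_eq_one hT.1]

end PrimeSimplex

section QuadraticElement

theorem sub_smul_pow_of_sub_mul_sub_eq_zero {R A : Type*} [CommRing R] [Ring A] [Algebra R A]
    {a : A} {l m : R} (h : (a - algebraMap R A l) * (a - algebraMap R A m) = 0) (n : ℕ) :
    (l - m) • a ^ n = (l ^ n - m ^ n) • a + algebraMap R A (l * m ^ n - m * l ^ n) := by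
  have hsq : a * a = (l + m) • a - algebraMap R A (l * m) := by
    rw [← sub_eq_zero, ← h]
    simp only [Algebra.algebraMap_eq_smul_one, mul_sub, sub_mul, smul_mul_assoc,
      mul_smul_comm, one_mul, mul_one]
    module
  induction n with
  | zero => simp [Algebra.algebraMap_eq_smul_one]
  | succ n ih =>
    rw [pow_succ, ← smul_mul_assoc, ih, add_mul, smul_mul_assoc, hsq]
    simp only [Algebra.algebraMap_eq_smul_one, smul_mul_assoc, one_mul]
    module

theorem pow_mem_bot_iff_pow_eq_pow {K A : Type*} [Field K] [Ring A] [Algebra K A]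
    {a : A} {l m : K} (h : (a - algebraMap K A l) * (a - algebraMap K A m) = 0)
    (hlm : l ≠ m) (ha : a ∉ (⊥ : Subalgebra K A)) (n : ℕ) :
    a ^ n ∈ (⊥ : Subalgebra K A) ↔ l ^ n = m ^ n := by
  have hsmul {c : K} (hc : c ≠ 0) {b : A} :
      c • b ∈ (⊥ : Subalgebra K A) ↔ b ∈ (⊥ : Subalgebra K A) :=
    Submodule.smul_mem_iff (Subalgebra.toSubmodule (⊥ : Subalgebra K A)) hc
  rw [← hsmul (sub_ne_zero.2 hlm), sub_smul_pow_of_sub_mul_sub_eq_zero h,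
    add_mem_cancel_right (Subalgebra.algebraMap_mem _ _)]
  refine ⟨fun hn ↦ ?_, fun hn ↦ by simp [hn]⟩
  by_contra hne
  exact ha ((hsmul (sub_ne_zero.2 hne)).1 hn)

theorem pow_char_eq_algebraMap_of_sub_sq_eq_zero {R A : Type*} [CommRing R] [Ring A] [Algebra R A]
    {p : ℕ} [Fact p.Prime] [CharP A p] {a : A} {l : R} (h : (a - algebraMap R A l) ^ 2 = 0) :
    a ^ p = algebraMap R A (l ^ p) := by
  have hp : (a - algebraMap R A l) ^ p = 0 := pow_eq_zero_of_le (Fact.out : p.Prime).two_le h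
  rwa [sub_pow_char_of_commute _ (Algebra.commute_algebraMap_right l a), sub_eq_zero,
    ← map_pow] at hp

theorem matrix_fin_two_sub_mul_sub_eq_zero {R : Type*} [CommRing R] [Nontrivial R]
    {M : Matrix (Fin 2) (Fin 2) R} {l m : R} (htr : M.trace = l + m) (hdet : M.det = l * m) :
    (M - algebraMap R _ l) * (M - algebraMap R _ m) = 0 := by
  have hchar : M.charpoly = (Polynomial.X - Polynomial.C l) * (Polynomial.X - Polynomial.C m) := by
    rw [Matrix.charpoly_fin_two, htr, hdet, map_add, map_mul]
    ring
  simpa [hchar] using M.aeval_self_charpoly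

end QuadraticElement

section AddInv

variable {K : Type*} [Field K]

theorem add_inv_eq_add_inv_iff {a b : K} (ha : a ≠ 0) (hb : b ≠ 0) :
    a + a⁻¹ = b + b⁻¹ ↔ a = b ∨ a = b⁻¹ := by
  have hfactor : a * (a + a⁻¹ - (b + b⁻¹)) = (a - b) * (a - b⁻¹) := by
    field_simp
    ring
  rw [← sub_eq_zero, ← mul_eq_zero_iff_left ha, hfactor, mul_eq_zero, sub_eq_zero, sub_eq_zero]

open Polynomial in
theorem exists_add_inv_eq [IsAlgClosed K] (t : K) : ∃ l : K, l ≠ 0 ∧ l + l⁻¹ = t := by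
  have hdeg : (X ^ 2 - C t * X + 1 : K[X]).degree = 2 := by compute_degree!
  obtain ⟨l, hl⟩ := IsAlgClosed.exists_root (X ^ 2 - C t * X + 1) (hdeg.trans_ne two_ne_zero)
  have hl' : l ^ 2 - t * l + 1 = 0 := by simpa using hl
  have hl0 : l ≠ 0 := by
    rintro rfl
    simp at hl'
  refine ⟨l, hl0, ?_⟩
  field_simp
  linear_combination hl'

theorem exists_pow_eq_one_and_orderOf_sq_eq_iff [IsAlgClosed K] {e : ℕ} [NeZero (e : K)] {n : ℕ} :
    (∃ l : K, l ^ e = 1 ∧ orderOf (l ^ 2) = n) ↔ n ∣ e / e.gcd 2 := by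
  constructor
  · rintro ⟨l, hl, rfl⟩
    rw [orderOf_dvd_iff_pow_eq_one, ← pow_mul, ← Nat.mul_div_assoc _ (Nat.gcd_dvd_left e 2),
      mul_comm, Nat.mul_div_assoc _ (Nat.gcd_dvd_right e 2), pow_mul, hl, one_pow]
  · intro hn
    have hd : e.gcd 2 * n ∣ e :=
      (Nat.dvd_div_iff_mul_dvd (Nat.gcd_dvd_left e 2)).1 hn
    have : NeZero ((e.gcd 2 * n : ℕ) : K) := ⟨fun h ↦ NeZero.ne (e : K) <| by
      simpa [h] using Nat.cast_dvd_cast (α := K) hd⟩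
    obtain ⟨l, hl⟩ := HasEnoughRootsOfUnity.exists_primitiveRoot K (e.gcd 2 * n)
    refine ⟨l, (hl.pow_eq_one_iff_dvd e).2 hd, ?_⟩
    have hgcd : (e.gcd 2 * n).gcd 2 = e.gcd 2 :=
      Nat.dvd_antisymm (Nat.gcd_dvd_gcd_of_dvd_left 2 hd)
        (Nat.dvd_gcd (Nat.dvd_mul_right _ _) (Nat.gcd_dvd_right e 2))
    rw [orderOf_pow' l two_ne_zero, ← hl.eq_orderOf, hgcd,
      Nat.mul_div_cancel_left _ (Nat.gcd_pos_of_pos_right e two_pos)]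

end AddInv

section FiniteField

variable {F : Type*} [Field F] [Fintype F] {K : Type*} [Field K] [Algebra F K]

theorem pow_card_eq_self_iff_mem_range {x : K} :
    x ^ Fintype.card F = x ↔ x ∈ (algebraMap F K).range := by
  constructor
  · intro hx
    have hs := Polynomial.splits_X_pow_nat_card_sub_X (K := F)
    rw [Nat.card_eq_fintype_card] at hs
    refine hs.mem_range_of_isRoot (FiniteField.X_pow_card_sub_X_ne_zero F Fintype.one_lt_card) ?_
    simp [hx]
  · rintro ⟨y, rfl⟩
    rw [← map_pow, FiniteField.pow_card]

theorem add_inv_mem_range_iff {l : K} (hl : l ≠ 0) :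
    l + l⁻¹ ∈ (algebraMap F K).range ↔
      l ^ (Fintype.card F - 1) = 1 ∨ l ^ (Fintype.card F + 1) = 1 := by
  have hfrob : (l + l⁻¹) ^ Fintype.card F = l ^ Fintype.card F + (l ^ Fintype.card F)⁻¹ := by
    simpa using map_add (FiniteField.frobeniusAlgHom F K) l l⁻¹
  rw [← pow_card_eq_self_iff_mem_range, hfrob, add_inv_eq_add_inv_iff (pow_ne_zero _ hl) hl,
    pow_succ, mul_eq_one_iff_eq_inv₀ hl, ← mul_eq_right₀ (a := l ^ (Fintype.card F - 1)) hl,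
    pow_sub_one_mul Fintype.card_ne_zero]

end FiniteField

open scoped MatrixGroups

theorem specialLinearGroup_mem_center_iff_mapMatrix_mem_bot {n R S : Type*} [Fintype n]
    [DecidableEq n] [CommRing R] [CommRing S] [Algebra R S] [FaithfulSMul R S]
    {A : Matrix.SpecialLinearGroup n R} :
    A ∈ Subgroup.center (Matrix.SpecialLinearGroup n R) ↔
      (algebraMap R S).mapMatrix (A : Matrix n n R) ∈ (⊥ : Subalgebra S (Matrix n n S)) := by
  constructor
  · rw [Matrix.SpecialLinearGroup.mem_center_iff]
    rintro ⟨r, -, hr⟩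
    refine ⟨algebraMap R S r, ?_⟩
    simp [← hr, Matrix.algebraMap_eq_diagonal, Matrix.diagonal_map]
  · rintro ⟨c, hc⟩
    refine Subgroup.mem_center_iff.2 fun B ↦ Subtype.ext ?_
    apply Matrix.map_injective (FaithfulSMul.algebraMap_injective R S)
    change (algebraMap R S).mapMatrix _ = (algebraMap R S).mapMatrix _
    rw [Matrix.SpecialLinearGroup.coe_mul, Matrix.SpecialLinearGroup.coe_mul, map_mul, map_mul,
      ← hc]
    exact (Algebra.commutes c _).symm

namespace PSL2

variable {F K : Type*} [Field F] [Field K] [Algebra F K]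

theorem mk_pow_eq_one_iff {A : SL(2, F)} (n : ℕ) :
    (A : PSL2 F) ^ n = 1 ↔ (algebraMap F K).mapMatrix (A : Matrix (Fin 2) (Fin 2) F) ^ n ∈
      (⊥ : Subalgebra K (Matrix (Fin 2) (Fin 2) K)) := by
  rw [← QuotientGroup.mk_pow, QuotientGroup.eq_one_iff,
    specialLinearGroup_mem_center_iff_mapMatrix_mem_bot (S := K), Matrix.SpecialLinearGroup.coe_pow,
    map_pow]

theorem sub_mul_sub_inv_eq_zero {A : SL(2, F)} {l : K} (hl : l ≠ 0)
    (htr : l + l⁻¹ = algebraMap F K (A : Matrix (Fin 2) (Fin 2) F).trace) :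
    ((algebraMap F K).mapMatrix (A : Matrix (Fin 2) (Fin 2) F) - algebraMap K _ l) *
      ((algebraMap F K).mapMatrix (A : Matrix (Fin 2) (Fin 2) F) - algebraMap K _ l⁻¹) = 0 := by
  refine matrix_fin_two_sub_mul_sub_eq_zero ?_ ?_
  · rw [htr, AddMonoidHom.map_trace]
    rfl
  · rw [mul_inv_cancel₀ hl, ← RingHom.map_det, A.2, map_one]

theorem sq_eq_one_of_mem_center {A : SL(2, F)} (hA : A ∈ Subgroup.center SL(2, F)) {l : K}
    (hl0 : l ≠ 0) (htr : l + l⁻¹ = algebraMap F K (A : Matrix (Fin 2) (Fin 2) F).trace) :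
    l ^ 2 = 1 := by
  obtain ⟨r, hr, hrA⟩ := Matrix.SpecialLinearGroup.mem_center_iff.1 hA
  set c := algebraMap F K r
  have hc : c ^ 2 = 1 := by simpa [c] using congrArg (algebraMap F K) hr
  have hc0 : c ≠ 0 := by
    intro h
    simp [h] at hc
  have hinv : c⁻¹ = c := inv_eq_of_mul_eq_one_left (by rwa [← sq])
  have hadd : c + c⁻¹ = l + l⁻¹ := by simp [htr, ← hrA, hinv, c, two_mul]
  rcases (add_inv_eq_add_inv_iff hc0 hl0).1 hadd with h | h
  · rwa [← h]
  · rw [← inv_inv l, ← h, inv_pow, hc, inv_one]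

theorem orderOf_mk_eq_orderOf_sq {A : SL(2, F)} {l : K} (hl0 : l ≠ 0)
    (hl : l ^ 2 ≠ 1) (htr : l + l⁻¹ = algebraMap F K (A : Matrix (Fin 2) (Fin 2) F).trace) :
    orderOf (A : PSL2 F) = orderOf (l ^ 2) := by
  have hA : (algebraMap F K).mapMatrix (A : Matrix (Fin 2) (Fin 2) F) ∉
      (⊥ : Subalgebra K (Matrix (Fin 2) (Fin 2) K)) := fun h ↦
    hl <| sq_eq_one_of_mem_center
      (specialLinearGroup_mem_center_iff_mapMatrix_mem_bot.2 h) hl0 htr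
  refine orderOf_eq_orderOf_iff.2 fun n ↦ ?_
  have hne : l ≠ l⁻¹ := fun h ↦ hl <| by rw [sq, ← mul_inv_cancel₀ hl0, ← h]
  rw [mk_pow_eq_one_iff (K := K), pow_mem_bot_iff_pow_eq_pow (sub_mul_sub_inv_eq_zero hl0 htr) hne
    hA, inv_pow, ← mul_eq_one_iff_eq_inv₀ (pow_ne_zero n hl0), ← sq,
    pow_right_comm]

theorem mk_pow_char_eq_one (p : ℕ) [Fact p.Prime] [CharP F p] {A : SL(2, F)}
    {l : K} (hl : l ^ 2 = 1) (htr : l + l⁻¹ = algebraMap F K (A : Matrix (Fin 2) (Fin 2) F).trace) :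
    (A : PSL2 F) ^ p = 1 := by
  have hl0 : l ≠ 0 := by
    rintro rfl
    simp at hl
  have hinv : l⁻¹ = l := inv_eq_of_mul_eq_one_left (by rwa [← sq])
  have := charP_of_injective_algebraMap' F (A := K) p
  have hzero := sub_mul_sub_inv_eq_zero hl0 htr
  rw [hinv, ← sq] at hzero
  rw [mk_pow_eq_one_iff (K := K), pow_char_eq_algebraMap_of_sub_sq_eq_zero hzero]
  exact Subalgebra.algebraMap_mem _ _

theorem exists_orderOf_eq_char (F : Type*) [Field F] (p : ℕ) [Fact p.Prime] [CharP F p] :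
    ∃ g : PSL2 F, orderOf g = p := by
  refine ⟨(Matrix.SpecialLinearGroup.transvection (zero_ne_one (α := Fin 2)) 1 : SL(2, F)),
    orderOf_eq_prime (mk_pow_char_eq_one (K := F) p (l := 1) (one_pow 2) ?_) ?_⟩
  · norm_num [Matrix.SpecialLinearGroup.transvection_coe]
  · simp [QuotientGroup.eq_one_iff, Matrix.SpecialLinearGroup.transvection_mem_center_iff]

theorem exists_orderOf_eq_orderOf_sq {l : K} (hl0 : l ≠ 0)
    (hl : l + l⁻¹ ∈ (algebraMap F K).range) : ∃ g : PSL2 F, orderOf g = orderOf (l ^ 2) := by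
  by_cases hsq : l ^ 2 = 1
  · exact ⟨1, by simp [hsq]⟩
  obtain ⟨t, ht⟩ := hl
  let A : SL(2, F) := ⟨!![0, -1; 1, t], by simp⟩
  exact ⟨A, orderOf_mk_eq_orderOf_sq hl0 hsq (by simp [A, ht])⟩

theorem exists_orderOf_eq_iff [Fintype F] (p : ℕ) [CharP F p] {n : ℕ} :
    (∃ g : PSL2 F, orderOf g = n) ↔ n ∣ p ∨
      n ∣ (Fintype.card F - 1) / (Fintype.card F - 1).gcd 2 ∨
      n ∣ (Fintype.card F + 1) / (Fintype.card F + 1).gcd 2 := by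
  let K := AlgebraicClosure F
  have : Fact p.Prime := ⟨CharP.char_is_prime F p⟩
  have hq : (Fintype.card F : K) = 0 := by
    rw [← map_natCast (algebraMap F K), FiniteField.cast_card_eq_zero, map_zero]
  have : NeZero ((Fintype.card F - 1 : ℕ) : K) := ⟨by simp [Nat.cast_sub Fintype.card_pos, hq]⟩
  have : NeZero ((Fintype.card F + 1 : ℕ) : K) := ⟨by simp [hq]⟩
  rw [← exists_pow_eq_one_and_orderOf_sq_eq_iff (K := K),
    ← exists_pow_eq_one_and_orderOf_sq_eq_iff (K := K), ← exists_or]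
  simp only [← or_and_right]
  constructor
  · rintro ⟨g, rfl⟩
    obtain ⟨A, rfl⟩ := QuotientGroup.mk_surjective g
    obtain ⟨l, hl0, htr⟩ := exists_add_inv_eq (algebraMap F K (A : Matrix (Fin 2) (Fin 2) F).trace)
    by_cases hl : l ^ 2 = 1
    · exact .inl (orderOf_dvd_of_pow_eq_one (mk_pow_char_eq_one p hl htr))
    · exact .inr ⟨l, (add_inv_mem_range_iff hl0).1 ⟨_, htr.symm⟩,
        (orderOf_mk_eq_orderOf_sq hl0 hl htr).symm⟩
  · rintro (hn | ⟨l, hl, rfl⟩)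
    · rcases (Nat.dvd_prime Fact.out).1 hn with rfl | rfl
      · exact ⟨1, orderOf_one⟩
      · exact exists_orderOf_eq_char F n
    · have hl0 : l ≠ 0 := by
        rintro rfl
        have : Fintype.card F - 1 ≠ 0 := (Nat.sub_pos_of_lt Fintype.one_lt_card).ne'
        simp [zero_pow this] at hl
      exact exists_orderOf_eq_orderOf_sq hl0 ((add_inv_mem_range_iff hl0).2 hl)

theorem isMaximalPrimeSimplex_singleton_char [Finite F] (p : ℕ) [CharP F p] :
    IsMaximalPrimeSimplex (PSL2 F) {p} := by
  have := Fintype.ofFinite F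
  have hp : p.Prime := CharP.char_is_prime F p
  have : Fact p.Prime := ⟨hp⟩
  have hpq : p ∣ Fintype.card F :=
    (CharP.cast_eq_zero_iff F p _).1 (FiniteField.cast_card_eq_zero F)
  refine isMaximalPrimeSimplex_singleton hp (exists_orderOf_eq_char F p) fun g hg ↦ ?_
  rcases (exists_orderOf_eq_iff p).1 ⟨g, rfl⟩ with h | h | h
  · exact Nat.dvd_antisymm h hg
  · have hsub : p ∣ Fintype.card F - 1 :=
      hg.trans (h.trans (Nat.div_dvd_of_dvd (Nat.gcd_dvd_left _ _)))
    exact absurd ((Nat.dvd_sub_iff_right Fintype.card_pos hpq).1 hsub) hp.not_dvd_one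
  · have hadd : p ∣ Fintype.card F + 1 :=
      hg.trans (h.trans (Nat.div_dvd_of_dvd (Nat.gcd_dvd_left _ _)))
    exact absurd ((Nat.dvd_add_right hpq).1 hadd) hp.not_dvd_one

theorem pure_iff [Fintype F] : PurePrimeSimplicialComplex (PSL2 F) ↔
    #((Fintype.card F - 1) / (Fintype.card F - 1).gcd 2).primeFactors ≤ 1 ∧
      #((Fintype.card F + 1) / (Fintype.card F + 1).gcd 2).primeFactors ≤ 1 := by
  obtain ⟨p, hchar⟩ := CharP.exists F
  have hp : p.Prime := CharP.char_is_prime F p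
  rw [pure_iff_card_primeFactors_orderOf_le_one (isMaximalPrimeSimplex_singleton_char p)]
  constructor
  · intro h
    obtain ⟨a, ha⟩ := (exists_orderOf_eq_iff (F := F) p).2 (.inr (.inl dvd_rfl))
    obtain ⟨b, hb⟩ := (exists_orderOf_eq_iff (F := F) p).2 (.inr (.inr dvd_rfl))
    exact ⟨ha ▸ h a, hb ▸ h b⟩
  · rintro ⟨hsub, hadd⟩ g
    have half_ne_zero {e : ℕ} (he : e ≠ 0) : e / e.gcd 2 ≠ 0 :=
      (Nat.div_gcd_pos_of_pos_left 2 (Nat.pos_of_ne_zero he)).ne'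
    rcases (exists_orderOf_eq_iff p).1 ⟨g, rfl⟩ with h | h | h
    · exact (card_le_card (Nat.primeFactors_mono h hp.ne_zero)).trans (by simp [hp.primeFactors])
    · have hne : Fintype.card F - 1 ≠ 0 := (Nat.sub_pos_of_lt Fintype.one_lt_card).ne'
      exact (card_le_card (Nat.primeFactors_mono h (half_ne_zero hne))).trans hsub
    · exact (card_le_card
        (Nat.primeFactors_mono h (half_ne_zero (Nat.succ_ne_zero _)))).trans hadd

end PSL2

theorem exists_eq_pow_of_card_primeFactors_le_one {m r : ℕ} (hm : #m.primeFactors ≤ 1)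
    (hm0 : m ≠ 0) (hr : r.Prime) (hrm : r ∣ m) : ∃ k, m = r ^ k :=
  ⟨_, Nat.eq_prime_pow_of_unique_prime_dvd hm0 fun hp hpm ↦ card_le_one.1 hm _
    (Nat.mem_primeFactors.2 ⟨hp, hpm, hm0⟩) _ (Nat.mem_primeFactors.2 ⟨hr, hrm, hm0⟩)⟩

theorem three_pow_mod_eighty (m : ℕ) :
    3 ^ m % 80 = 1 ∨ 3 ^ m % 80 = 3 ∨ 3 ^ m % 80 = 9 ∨ 3 ^ m % 80 = 27 := by
  induction m with
  | zero => simp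
  | succ m ih => omega

theorem eq_one_or_eq_three_of_two_pow_add_one_eq_three_pow {f m : ℕ} (h : 2 ^ f + 1 = 3 ^ m) :
    f = 1 ∨ f = 3 := by
  have hmod := three_pow_mod_eighty m
  rcases lt_or_ge f 4 with hf | hf
  · interval_cases f <;> omega
  · obtain ⟨g, rfl⟩ := Nat.exists_eq_add_of_le' hf
    rw [pow_add] at h
    -- `3 ^ m ≡ 1` modulo `16` occurs only for `3 ^ m ≡ 1` modulo `80`.
    have h5 : 5 ∣ 2 ^ g := by omega
    have : 5 ∣ 2 := Nat.prime_five.dvd_of_dvd_pow h5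
    omega

theorem eq_one_or_eq_two_of_two_pow_eq_three_pow_add_one {f m : ℕ} (h : 2 ^ f = 3 ^ m + 1) :
    f = 1 ∨ f = 2 := by
  have hmod := three_pow_mod_eighty m
  have hf : f < 3 := by
    by_contra! hf
    obtain ⟨g, rfl⟩ := Nat.exists_eq_add_of_le' hf
    rw [pow_add] at h
    omega
  interval_cases f <;> omega

theorem eq_one_or_eq_three_of_card_primeFactors_two_pow_add_one {f : ℕ} (hf : Odd f)
    (h : #(2 ^ f + 1).primeFactors ≤ 1) : f = 1 ∨ f = 3 := by
  have h3 : 3 ∣ 2 ^ f + 1 := by simpa using hf.nat_add_dvd_pow_add_pow 2 1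
  obtain ⟨m, hm⟩ :=
    exists_eq_pow_of_card_primeFactors_le_one h (Nat.succ_ne_zero _) Nat.prime_three h3
  exact eq_one_or_eq_three_of_two_pow_add_one_eq_three_pow hm

theorem eq_zero_or_eq_two_of_card_primeFactors_two_pow_sub_one {f : ℕ} (hf : Even f)
    (h : #(2 ^ f - 1).primeFactors ≤ 1) : f = 0 ∨ f = 2 := by
  refine or_iff_not_imp_left.2 fun hf0 ↦ ?_
  have h3 : 3 ∣ 2 ^ f - 1 := by
    obtain ⟨k, rfl⟩ := hf.two_dvd
    simpa [pow_mul] using Nat.sub_dvd_pow_sub_pow 4 1 k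
  have hlt : 1 < 2 ^ f := Nat.one_lt_two_pow hf0
  obtain ⟨m, hm⟩ := exists_eq_pow_of_card_primeFactors_le_one h (by omega) Nat.prime_three h3
  have heq : 2 ^ f = 3 ^ m + 1 := by omega
  rcases eq_one_or_eq_two_of_two_pow_eq_three_pow_add_one heq with rfl | rfl
  · simp at hf
  · rfl

theorem eq_one_or_two_or_three_of_card_primeFactors_two_pow_sub_one_add_one {f : ℕ} (hf : f ≠ 0)
    (hsub : #(2 ^ f - 1).primeFactors ≤ 1) (hadd : #(2 ^ f + 1).primeFactors ≤ 1) :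
    f = 1 ∨ f = 2 ∨ f = 3 := by
  rcases f.even_or_odd with heven | hodd
  · have := eq_zero_or_eq_two_of_card_primeFactors_two_pow_sub_one heven hsub
    omega
  · have := eq_one_or_eq_three_of_card_primeFactors_two_pow_add_one hodd hadd
    omega

theorem le_three_of_card_primeFactors_two_pow_add_one_succ {a : ℕ}
    (h : #(2 ^ a + 1).primeFactors ≤ 1) (hsucc : #(2 ^ (a + 1) + 1).primeFactors ≤ 1) :
    a ≤ 3 := by
  rcases a.even_or_odd with heven | hodd
  · have := eq_one_or_eq_three_of_card_primeFactors_two_pow_add_one heven.add_one hsucc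
    omega
  · have := eq_one_or_eq_three_of_card_primeFactors_two_pow_add_one hodd h
    omega

theorem le_two_of_card_primeFactors_two_pow_sub_one_succ {a : ℕ}
    (h : #(2 ^ a - 1).primeFactors ≤ 1) (hsucc : #(2 ^ (a + 1) - 1).primeFactors ≤ 1) :
    a ≤ 2 := by
  rcases a.even_or_odd with heven | hodd
  · have := eq_zero_or_eq_two_of_card_primeFactors_two_pow_sub_one heven h
    omega
  · have := eq_zero_or_eq_two_of_card_primeFactors_two_pow_sub_one hodd.add_one hsucc
    omega

theorem two_mul_add_one_mem_of_card_primeFactors {c : ℕ} (hc0 : c ≠ 0)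
    (hc : #c.primeFactors ≤ 1) (hc' : #(c + 1).primeFactors ≤ 1)
    (hq : #(2 * c + 1).primeFactors ≤ 1) : 2 * c + 1 ∈ ({3, 5, 7, 9, 17} : Finset ℕ) := by
  rcases c.even_or_odd with heven | hodd
  · obtain ⟨a, rfl⟩ :=
      exists_eq_pow_of_card_primeFactors_le_one hc hc0 Nat.prime_two heven.two_dvd
    rw [← pow_succ'] at hq ⊢
    have ha := le_three_of_card_primeFactors_two_pow_add_one_succ hc' hq
    interval_cases a <;> simp
  · obtain ⟨a, ha⟩ := exists_eq_pow_of_card_primeFactors_le_one hc' (Nat.succ_ne_zero c)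
      Nat.prime_two hodd.add_one.two_dvd
    obtain rfl : c = 2 ^ a - 1 := by omega
    have hq' : 2 * (2 ^ a - 1) + 1 = 2 ^ (a + 1) - 1 := by omega
    rw [hq'] at hq ⊢
    have ha := le_two_of_card_primeFactors_two_pow_sub_one_succ hc hq
    interval_cases a <;> simp at hc0 ⊢

theorem card_primeFactors_sub_one_add_one_div_gcd_two_le_one_iff {q : ℕ} (hq : IsPrimePow q) :
    (#((q - 1) / (q - 1).gcd 2).primeFactors ≤ 1 ∧ #((q + 1) / (q + 1).gcd 2).primeFactors ≤ 1) ↔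
      q ∈ ({2, 3, 4, 5, 7, 8, 9, 17} : Finset ℕ) := by
  refine ⟨fun ⟨hsub, hadd⟩ ↦ ?_, fun h ↦ ?_⟩
  · have hqω : #q.primeFactors ≤ 1 := (isPrimePow_iff_card_primeFactors_eq_one.1 hq).le
    rcases q.even_or_odd with heven | ⟨c, rfl⟩
    · rw [(Nat.coprime_two_right.2 (Nat.Even.sub_odd hq.one_lt.le heven odd_one)).gcd_eq_one,
        Nat.div_one] at hsub
      rw [(Nat.coprime_two_right.2 heven.add_one).gcd_eq_one, Nat.div_one] at hadd
      obtain ⟨f, rfl⟩ :=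
        exists_eq_pow_of_card_primeFactors_le_one hqω hq.ne_zero Nat.prime_two heven.two_dvd
      have hf : f ≠ 0 := by
        rintro rfl
        simp at heven
      rcases eq_one_or_two_or_three_of_card_primeFactors_two_pow_sub_one_add_one hf hsub hadd with
        rfl | rfl | rfl <;> simp
    · have hc : c ≠ 0 := by
        have := hq.one_lt
        omega
      have hsub' : (2 * c + 1 - 1) / (2 * c + 1 - 1).gcd 2 = c := by simp
      have hadd' : (2 * c + 1 + 1) / (2 * c + 1 + 1).gcd 2 = c + 1 := by
        rw [show 2 * c + 1 + 1 = 2 * (c + 1) by ring]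
        simp
      rw [hsub'] at hsub
      rw [hadd'] at hadd
      have hmem := two_mul_add_one_mem_of_card_primeFactors hc hsub hadd hqω
      simp only [mem_insert, mem_singleton] at hmem ⊢
      tauto
  · simp only [mem_insert, mem_singleton] at h
    rcases h with rfl | rfl | rfl | rfl | rfl | rfl | rfl | rfl <;> decide +kernel

theorem stmt_18 (F : Type) [Field F] [Fintype F] (hq : 4 ≤ Fintype.card F) :
    PurePrimeSimplicialComplex (PSL2 F) ↔
      Fintype.card F ∈ ({4, 5, 7, 8, 9, 17} : Finset ℕ) := by
  rw [PSL2.pure_iff,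
    card_primeFactors_sub_one_add_one_div_gcd_two_le_one_iff (FiniteField.isPrimePow_card F)]
  simp only [mem_insert, mem_singleton]
  omega
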